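/- For every partition λ = (λ₁ ≥ λ₂ ≥ … ≥ λ_l ≥ 0), applying the vertex operator components to the vacuum vector 1 ∈ Λ gives the Schur function: S_{−λ₁} S_{−λ₂} ⋯ S_{−λ_l}(1) = det(h_{λ_i−i+j})_{1≤i,j≤l} = s_λ. -/

import Mathlib

/-!
The operators `(-1)^j e_j(∂)` have generating function
`exp (-∑ (b_n/n) uⁿ) = exp (-∑ uⁿ ∂/∂p_n)`, which by Taylor's formula is the translation
`φ : p_n ↦ p_n - uⁿ`, an algebra homomorphism `Λ → Λ[u]` (`coeff_shift`, proved by comparing the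
chain rule for `d/du` with the recursion for `e_k`). Hence `S_{-m} P` is the image of `φ(P)` under
the `Λ`-linear substitution `u^j ↦ h_{m+j}` (`Sop_eq`).

Since `φ` multiplies `∑ h_k t^k` by `1 - ut`, it sends `h_k` to `h_k - u h_{k-1}` (`shift_hZ`), and
so it sends the determinant `s_ρ` to `det (h_{ρ_i-i+j} - u h_{ρ_i-i+j-1})`. Undoing column
operations, this is the determinant of the Jacobi–Trudi matrix of `(m, ρ)` with first row replaced
by `1, u, …, u^l` (`shift_schur`). The substitution `u^j ↦ h_{m+j}` restores the first row, so
`S_{-m} s_ρ = s_{(m,ρ)}` for all integers `m` and integer tuples `ρ` (`Sop_schur`), and the theorem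
follows by induction on `l`.
-/

open MvPolynomial

noncomputable section

/-- The ring of symmetric functions `Λ = ℚ[p₁,p₂,…]`, with the variable `X n`
(for `n : ℕ+`) playing the role of the power sum `p_n`. -/
abbrev Lam : Type := MvPolynomial ℕ+ ℚ

/-- The power sum `p_n`. -/
def pp (n : ℕ+) : Lam := X n

/-- The family `g` with generating function `∑_k g_k t^k = exp (∑_{n≥1} c n · p_n tⁿ / n)`,
characterized by `g 0 = 1` together with the recursion obtained by differentiating the
generating function:  `(k+1) · g (k+1) = ∑_{i=0}^{k} c (i+1) · p_{i+1} · g (k-i)`. -/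
def genFam (c : ℕ → ℚ) : ℕ → Lam
  | 0 => 1
  | (k+1) => (((k : ℚ) + 1)⁻¹) •
      ∑ i ∈ Finset.range (k+1), c (i+1) • (pp ⟨i+1, Nat.succ_pos i⟩ * genFam c (k - i))
  decreasing_by exact Nat.lt_succ_of_le (Nat.sub_le k i)

/-- The complete homogeneous symmetric function `h_k`,
with generating function `exp (∑ p_n tⁿ/n)`. -/
def hh : ℕ → Lam := genFam fun _ => 1

/-- The elementary symmetric function `e_k`,
with generating function `exp (∑ (−1)^{n−1} p_n tⁿ/n)`. -/
def ee : ℕ → Lam := genFam fun n => (-1)^(n+1)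

/-- `h` indexed by `ℤ` (zero for negative indices). -/
def hZ (n : ℤ) : Lam := if 0 ≤ n then hh n.toNat else 0

/-- `e` indexed by `ℤ` (zero for negative indices). -/
def eZ (n : ℤ) : Lam := if 0 ≤ n then ee n.toNat else 0

/-- The differential operator `∏_i (i·∂/∂p_i)^(α i)` (the factors commute,
so the sorted product is the canonical one). -/
def monOp (α : ℕ+ →₀ ℕ) : Module.End ℚ Lam :=
  ((α.support.sort (· ≤ ·)).map fun (i : ℕ+) => (((i : ℕ) : ℚ) • (pderiv i).toLinearMap) ^ (α i)).prod

/-- `f(∂) P`: substitute `p_i ↦ i·∂/∂p_i` in `f` and apply the result to `P`. -/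
def Dop (f : Lam) (P : Lam) : Lam := ∑ α ∈ f.support, f.coeff α • monOp α P

/-- A bound for the weighted degree (`p_i` of weight `i`) of `P`;
`e_j(∂) P = 0 = h_j(∂) P` whenever `j > wbound P`. -/
def wbound (P : Lam) : ℕ := P.support.sup fun α => α.sum fun i k => (i : ℕ) * k

/-- The vertex operator component `S_n = ∑_{j ≥ max(0,n)} (−1)^j h_{j−n} · e_j(∂)`;
on a given polynomial only the (finitely many) terms with `j ≤ wbound P` act nontrivially. -/
def Sop (n : ℤ) (P : Lam) : Lam :=
  ∑ j ∈ Finset.range (wbound P + 1),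
    if n ≤ (j : ℤ) then ((-1 : ℚ)) ^ j • (hZ ((j : ℤ) - n) * Dop (ee j) P) else 0

/-- The dual vertex operator component `S*_n = ∑_{j ≥ max(0,−n)} (−1)^{j+n} e_{j+n} · h_j(∂)`. -/
def SstarOp (n : ℤ) (P : Lam) : Lam :=
  ∑ j ∈ Finset.range (wbound P + 1),
    if -n ≤ (j : ℤ) then ((-1 : ℚ)) ^ ((j : ℤ) + n) • (eZ ((j : ℤ) + n) * Dop (hh j) P) else 0

/-- The Schur function of an arbitrary integer tuple, via the Jacobi–Trudi determinant
`s_ρ = det (h_{ρ_i − i + j})`. -/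
def schur {l : ℕ} (ρ : Fin l → ℤ) : Lam :=
  (Matrix.of fun i j : Fin l => hZ (ρ i - (i.1 : ℤ) + (j.1 : ℤ))).det

/-- The dual Schur function of an integer tuple, `s_{ρ'} = det (e_{ρ_i − i + j})`. -/
def schurE {l : ℕ} (ρ : Fin l → ℤ) : Lam :=
  (Matrix.of fun i j : Fin l => eZ (ρ i - (i.1 : ℤ) + (j.1 : ℤ))).det


/-! ### Differential operators with constant coefficients -/

/-- The operator `b_i = i·∂/∂p_i`. -/
def bop (i : ℕ+) : Module.End ℚ Lam := ((i : ℕ) : ℚ) • (pderiv i).toLinearMap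

lemma bop_apply (i : ℕ+) (P : Lam) : bop i P = ((i : ℕ) : ℚ) • pderiv i P := rfl

lemma pderiv_swap (i j : ℕ+) (P : Lam) : pderiv i (pderiv j P) = pderiv j (pderiv i P) := by
  have h : ⁅(pderiv i : Derivation ℚ Lam Lam), (pderiv j : Derivation ℚ Lam Lam)⁆ = 0 := by
    apply MvPolynomial.derivation_ext
    intro k
    simp [Derivation.commutator_apply, pderiv_X, Pi.single_apply, apply_ite]
  have := congrArg (fun D : Derivation ℚ Lam Lam => D P) h
  simpa [Derivation.commutator_apply, sub_eq_zero] using this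

lemma bop_comm (i j : ℕ+) : bop i * bop j = bop j * bop i := by
  refine LinearMap.ext fun P => ?_
  simp only [Module.End.mul_apply, bop_apply, map_smul]
  rw [pderiv_swap, smul_comm]

/-- The subalgebra of `End Λ` generated by the `b_i`. It is commutative, which makes the
substitution `p_i ↦ b_i` available through `aeval`. -/
abbrev bAlg : Subalgebra ℚ (Module.End ℚ Lam) := Algebra.adjoin ℚ (Set.range bop)

instance bAlgCommRing : CommRing bAlg :=
  { (inferInstance : Ring bAlg) with
    mul_comm := (Algebra.isMulCommutative_adjoin ℚ (s := Set.range bop) (by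
      rintro _ ⟨i, rfl⟩ _ ⟨j, rfl⟩
      exact bop_comm i j)).is_comm.comm }

/-- The generator `b_i` of `bAlg`. -/
def bGen (i : ℕ+) : bAlg := ⟨bop i, Algebra.subset_adjoin ⟨i, rfl⟩⟩

/-- The substitution `f ↦ f(∂)` as an algebra map. -/
def diffSubst : Lam →ₐ[ℚ] bAlg := aeval bGen

lemma monOp_eq (α : ℕ+ →₀ ℕ) :
    monOp α = ((α.prod fun i k => bGen i ^ k : bAlg) : Module.End ℚ Lam) := by
  have : (α.prod fun i k => bGen i ^ k : bAlg)
      = ((α.support.sort (· ≤ ·)).map fun i => bGen i ^ α i).prod := by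
    rw [Finsupp.prod, ← List.prod_toFinset _ (Finset.sort_nodup _ _), Finset.sort_toFinset]
  rw [this, monOp]
  change _ = bAlg.val _
  rw [map_list_prod, List.map_map]
  congr 1

lemma Dop_eq (f P : Lam) : Dop f P = (diffSubst f : Module.End ℚ Lam) P := by
  have : (diffSubst f : Module.End ℚ Lam) = ∑ α ∈ f.support, f.coeff α • monOp α := by
    rw [diffSubst, aeval_def, eval₂_eq]
    change bAlg.val _ = _
    rw [map_sum]
    refine Finset.sum_congr rfl fun α _ => ?_
    rw [monOp_eq, ← Algebra.smul_def, map_smul]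
    rfl
  rw [this, Dop, LinearMap.sum_apply]
  rfl

/-! ### The translation `p_n ↦ p_n - uⁿ` -/

/-- The translation `φ : p_n ↦ p_n - uⁿ`, as an algebra map `Λ → Λ[u]`. -/
def shift : Lam →ₐ[ℚ] Polynomial Lam :=
  aeval fun n : ℕ+ => Polynomial.C (X n) - Polynomial.X ^ (n : ℕ)

lemma shift_X (n : ℕ+) : shift (X n) = Polynomial.C (X n) - Polynomial.X ^ (n : ℕ) := by
  simp [shift]

lemma shift_C (a : ℚ) : shift (C a) = Polynomial.C (C a) := by
  have := shift.commutes a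
  rw [MvPolynomial.algebraMap_eq] at this
  rw [this]
  rfl

/-- Chain rule `d/du φ(P) = -∑_{n≥1} n u^{n-1} φ(∂P/∂p_n)`, truncated
modulo `u^N` so that the sum is finite. -/
lemma shift_chain (N : ℕ) (P : Lam) :
    Polynomial.X ^ N ∣ Polynomial.derivative (shift P) +
      ∑ i ∈ Finset.range N, ((i : Polynomial Lam) + 1) * Polynomial.X ^ i *
        shift (pderiv i.succPNat P) := by
  induction P using MvPolynomial.induction_on with
  | C a =>
    simp
  | add p q hp hq =>
    convert dvd_add hp hq using 1
    simp only [map_add, mul_add, Finset.sum_add_distrib]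
    ring
  | mul_X p n hp =>
    have key : Polynomial.derivative (shift (X n : Lam)) +
      ∑ i ∈ Finset.range N, ((i : Polynomial Lam) + 1) * Polynomial.X ^ i *
        shift (pderiv i.succPNat (X n)) =
        if (n : ℕ) - 1 < N then 0
        else - ((n : ℕ) : Polynomial Lam) * Polynomial.X ^ ((n : ℕ) - 1) := by
      have hs : ∀ i : ℕ, shift (pderiv i.succPNat (X n : Lam)) =
          if i = (n : ℕ) - 1 then 1 else 0 := by
        intro i
        have : (i = (n : ℕ) - 1) ↔ n = i.succPNat := by
          have := n.pos
          rw [← PNat.coe_inj, Nat.succPNat_coe]; omega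
        rw [pderiv_X, Pi.single_apply]
        by_cases h : n = i.succPNat
        · rw [if_pos h, if_pos (this.2 h), map_one]
        · rw [if_neg h, if_neg (mt this.1 h), map_zero]
      simp only [hs, mul_ite, mul_one, mul_zero, Finset.sum_ite_eq', Finset.mem_range]
      have hn : ((n : ℕ) : Polynomial Lam) = (((n : ℕ) - 1 : ℕ) : Polynomial Lam) + 1 := by
        have := n.pos
        rw [← Nat.cast_succ]
        congr 1
        omega
      rw [shift_X, Polynomial.derivative_sub, Polynomial.derivative_C,
        Polynomial.derivative_X_pow, zero_sub, map_natCast, ← hn]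
      split_ifs <;> ring
    have key' : Polynomial.X ^ N ∣ Polynomial.derivative (shift (X n : Lam)) +
      ∑ i ∈ Finset.range N, ((i : Polynomial Lam) + 1) * Polynomial.X ^ i *
        shift (pderiv i.succPNat (X n)) := by
      rw [key]
      split_ifs with h
      · exact dvd_zero _
      · exact Dvd.dvd.mul_left (pow_dvd_pow _ (by omega)) _
    convert dvd_add (hp.mul_left (shift (X n))) (key'.mul_left (shift p)) using 1
    have hterm : ∀ i : ℕ, ((i : Polynomial Lam) + 1) * Polynomial.X ^ i *
          shift (pderiv i.succPNat (p * X n)) =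
        shift (X n) * (((i : Polynomial Lam) + 1) * Polynomial.X ^ i *
          shift (pderiv i.succPNat p)) +
        shift p * (((i : Polynomial Lam) + 1) * Polynomial.X ^ i *
          shift (pderiv i.succPNat (X n))) := by
      intro i
      rw [Derivation.leibniz, smul_eq_mul, smul_eq_mul, map_add, map_mul, map_mul]
      ring
    simp_rw [hterm]
    rw [Finset.sum_add_distrib, ← Finset.mul_sum, ← Finset.mul_sum, map_mul,
      Polynomial.derivative_mul]
    ring

lemma coeff_shift_succ (k : ℕ) (P : Lam) :
    ((k : ℚ) + 1) • (shift P).coeff (k + 1) =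
      - ∑ i ∈ Finset.range (k + 1), (shift (bop i.succPNat P)).coeff (k - i) := by
  have h := (Polynomial.X_pow_dvd_iff.1 (shift_chain (k + 1) P)) k (Nat.lt_succ_self k)
  rw [Polynomial.coeff_add, Polynomial.coeff_derivative, Polynomial.finsetSum_coeff] at h
  rw [Algebra.smul_def, mul_comm, ← add_eq_zero_iff_eq_neg]
  convert h using 2
  · simp
  · refine Finset.sum_congr rfl fun i hi => ?_
    have : i ≤ k := by simpa [Nat.lt_succ_iff] using hi
    have hc : ((i : Polynomial Lam) + 1) * Polynomial.X ^ i * shift (pderiv i.succPNat P) =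
        Polynomial.X ^ i * shift (bop i.succPNat P) := by
      rw [bop_apply, map_smul, Algebra.smul_def]
      simp only [Nat.succPNat_coe, Nat.succ_eq_add_one, Nat.cast_add, Nat.cast_one]
      rw [map_add, map_natCast, map_one]
      ring
    rw [hc, Polynomial.coeff_X_pow_mul', if_pos this]

lemma natDegree_shift_le (P : Lam) : (shift P).natDegree ≤ wbound P := by
  rw [shift, aeval_def, eval₂_eq]
  refine Polynomial.natDegree_sum_le_of_forall_le _ _ fun α hα => ?_
  refine le_trans ?_ (Finset.le_sup (f := fun α : ℕ+ →₀ ℕ => α.sum fun i k => (i : ℕ) * k) hα)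
  have : algebraMap ℚ (Polynomial Lam) (coeff α P) = Polynomial.C (C (coeff α P)) := rfl
  rw [this]
  refine (Polynomial.natDegree_C_mul_le _ _).trans ((Polynomial.natDegree_prod_le _ _).trans ?_)
  refine Finset.sum_le_sum fun i _ => ?_
  refine Polynomial.natDegree_pow_le.trans ?_
  rw [mul_comm]
  refine Nat.mul_le_mul_right _ ?_
  refine (Polynomial.natDegree_sub_le _ _).trans ?_
  simp

/-! ### The translation in terms of `e_k(∂)`, and its values on `h_k` -/

lemma hh_succ (k : ℕ) : ((k : ℚ) + 1) • hh (k + 1) =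
    ∑ i ∈ Finset.range (k + 1), X i.succPNat * hh (k - i) := by
  have : (k : ℚ) + 1 ≠ 0 := by positivity
  rw [hh, genFam, smul_inv_smul₀ this]
  simp [pp]; rfl

lemma ee_succ (k : ℕ) : ((k : ℚ) + 1) • ee (k + 1) =
    ∑ i ∈ Finset.range (k + 1), (-1 : ℚ) ^ i • (X i.succPNat * ee (k - i)) := by
  have : (k : ℚ) + 1 ≠ 0 := by positivity
  rw [ee, genFam, smul_inv_smul₀ this]
  refine Finset.sum_congr rfl fun i _ => ?_
  rw [pow_succ, pow_succ, mul_neg_one, mul_neg_one, neg_neg]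
  rfl

/-- The translation is the generating function of the operators `(-1)^k e_k(∂)`. -/
lemma coeff_shift (k : ℕ) (P : Lam) : (shift P).coeff k = (-1 : ℚ) ^ k • Dop (ee k) P := by
  induction k using Nat.strong_induction_on generalizing P with
  | _ k ih =>
  cases k with
  | zero =>
    have h0 : (Polynomial.constantCoeff : Polynomial Lam →+* Lam).comp shift.toRingHom
        = RingHom.id Lam := by
      apply MvPolynomial.ringHom_ext
      · intro a
        have := shift_C a
        simp [this]
      · intro n
        have hn : (n : ℕ) ≠ 0 := n.ne_zero
        simp [shift_X, hn.symm]
    have h0P : (shift P).coeff 0 = P := congrArg (fun f : Lam →+* Lam => f P) h0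
    rw [h0P, Dop_eq, ee, genFam]
    simp
  | succ k =>
    have hk : (k : ℚ) + 1 ≠ 0 := by positivity
    apply smul_right_injective Lam hk
    change ((k : ℚ) + 1) • _ = ((k : ℚ) + 1) • _
    have hD : ((k : ℚ) + 1) • Dop (ee (k + 1)) P =
        ∑ i ∈ Finset.range (k + 1), (-1 : ℚ) ^ i • Dop (ee (k - i)) (bop i.succPNat P) := by
      have hX : ∀ i : ℕ+, diffSubst (X i) = bGen i := fun i => by simp [diffSubst]
      have h := congrArg (fun f : Lam => bAlg.val (diffSubst f) P) (ee_succ k)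
      simp only [map_smul, map_sum, LinearMap.smul_apply, LinearMap.sum_apply] at h
      rw [Dop_eq]
      refine h.trans (Finset.sum_congr rfl fun i _ => ?_)
      -- the operators `e_{k-i}(∂)` and `b_{i+1}` commute, so `b_{i+1}` may act first
      rw [mul_comm, map_mul, map_mul, hX, Dop_eq]
      rfl
    rw [coeff_shift_succ, smul_comm, hD, Finset.smul_sum, ← Finset.sum_neg_distrib]
    refine Finset.sum_congr rfl fun i hi => ?_
    have hik : i ≤ k := by simpa [Nat.lt_succ_iff] using hi
    rw [ih (k - i) (by omega), smul_smul, ← neg_smul]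
    congr 1
    obtain ⟨d, rfl⟩ := Nat.exists_eq_add_of_le hik
    rw [Nat.add_sub_cancel_left]
    have hi2 : ((-1 : ℚ) ^ i) * (-1) ^ i = 1 := by rw [← mul_pow]; simp
    rw [pow_succ, pow_add]
    linear_combination (-1 : ℚ) ^ d * hi2

lemma hZ_natCast (k : ℕ) : hZ k = hh k := by simp [hZ]

lemma hZ_neg {k : ℤ} (hk : k < 0) : hZ k = 0 := by simp [hZ, hk]

/-- The recursion for `h`, with a term for `i = k` that vanishes; it includes the case `k = 0`. -/
lemma hZ_rec (k : ℕ) :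
    ∑ i ∈ Finset.range (k + 1), X i.succPNat * hZ ((k : ℤ) - 1 - i) = (k : ℚ) • hh k := by
  cases k with
  | zero => simp [hZ_neg]
  | succ k =>
    rw [Finset.sum_range_succ, hZ_neg (by omega), mul_zero, add_zero, Nat.cast_succ k,
      Nat.cast_succ k, hh_succ]
    refine Finset.sum_congr rfl fun i hi => ?_
    have hik : i ≤ k := by simpa [Nat.lt_succ_iff] using hi
    rw [← hZ_natCast]
    congr 2
    omega

/-- In generating-function form: `φ` multiplies `∑ h_k t^k` by `1 - ut`. -/
lemma shift_hh (k : ℕ) :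
    shift (hh k) = Polynomial.C (hh k) - Polynomial.X * Polynomial.C (hZ ((k : ℤ) - 1)) := by
  induction k using Nat.strong_induction_on with
  | _ k ih =>
  cases k with
  | zero => simp [hh, genFam, hZ_neg]
  | succ k =>
    have hk : (k : ℚ) + 1 ≠ 0 := by positivity
    apply smul_right_injective (Polynomial Lam) hk
    change ((k : ℚ) + 1) • _ = ((k : ℚ) + 1) • _
    have hterm : ∀ i ∈ Finset.range (k + 1), shift (X i.succPNat * hh (k - i)) =
        Polynomial.C (X i.succPNat * hh (k - i))
        - Polynomial.X * Polynomial.C (X i.succPNat * hZ ((k : ℤ) - 1 - i))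
        - (Polynomial.X ^ (i + 1) * Polynomial.C (hZ ((k : ℤ) - i))
          - Polynomial.X ^ (i + 1 + 1) * Polynomial.C (hZ ((k : ℤ) - (i + 1 : ℕ)))) := by
      intro i hi
      have hik : i ≤ k := by simpa [Nat.lt_succ_iff] using hi
      have e1 : ((k - i : ℕ) : ℤ) - 1 = (k : ℤ) - 1 - i := by omega
      have e2 : (k : ℤ) - (i + 1 : ℕ) = (k : ℤ) - 1 - i := by omega
      have e3 : (k : ℤ) - i = (k - i : ℕ) := by omega
      rw [map_mul, ih (k - i) (by omega), shift_X, e1, e2, e3, hZ_natCast, Polynomial.C_mul,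
        Polynomial.C_mul, Nat.succPNat_coe, Nat.succ_eq_add_one]
      ring
    rw [← map_smul, hh_succ, map_sum, Finset.sum_congr rfl hterm, Finset.sum_sub_distrib,
      Finset.sum_sub_distrib, ← Finset.mul_sum, ← map_sum, ← map_sum, ← hh_succ, hZ_rec,
      Finset.sum_range_sub' (fun i => Polynomial.X ^ (i + 1) * Polynomial.C (hZ ((k : ℤ) - i)))]
    rw [hZ_neg (show (k : ℤ) - (k + 1 : ℕ) < 0 by omega), smul_sub,
      show ((k + 1 : ℕ) : ℤ) - 1 = k by omega]
    simp only [Nat.cast_zero, sub_zero, map_zero, mul_zero, zero_add, pow_one, hZ_natCast,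
      ← Polynomial.smul_C, add_smul, one_smul, mul_smul_comm, map_add]
    ring

lemma shift_hZ (k : ℤ) :
    shift (hZ k) = Polynomial.C (hZ k) - Polynomial.X * Polynomial.C (hZ (k - 1)) := by
  rcases lt_or_ge k 0 with hk | hk
  · simp [hZ_neg hk, hZ_neg (show k - 1 < 0 by omega)]
  · lift k to ℕ using hk
    rw [hZ_natCast, shift_hh]

/-! ### Action of `S_n` on Jacobi–Trudi determinants -/

/-- `S_n P` is obtained from `φ(P)` by the substitution `u^j ↦ h_{j-n}`. -/
lemma Sop_eq (n : ℤ) (P : Lam) (N : ℕ) (hN : (shift P).natDegree < N) :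
    Sop n P = ∑ j ∈ Finset.range N, hZ ((j : ℤ) - n) * (shift P).coeff j := by
  have h1 : ∀ M : ℕ, (shift P).natDegree < M →
      ∑ j ∈ Finset.range M, hZ ((j : ℤ) - n) * (shift P).coeff j =
      ∑ j ∈ Finset.range ((shift P).natDegree + 1), hZ ((j : ℤ) - n) * (shift P).coeff j := by
    intro M hM
    symm
    apply Finset.sum_subset
    · intro j hj; simp at *; omega
    · intro j _ hj
      rw [Polynomial.coeff_eq_zero_of_natDegree_lt (by simpa [Nat.lt_succ_iff] using hj), mul_zero]
  rw [h1 N hN, ← h1 (wbound P + 1) (Nat.lt_succ_of_le (natDegree_shift_le P)), Sop]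
  refine Finset.sum_congr rfl fun j _ => ?_
  split_ifs with h
  · rw [coeff_shift, mul_smul_comm]
  · rw [hZ_neg (by omega), zero_mul]

/-- The Jacobi–Trudi matrix `(h_{ρ_i - i + j})`. -/
def jtMatrix {l : ℕ} (ρ : Fin l → ℤ) : Matrix (Fin l) (Fin l) Lam :=
  Matrix.of fun i j : Fin l => hZ (ρ i - (i.1 : ℤ) + (j.1 : ℤ))

lemma schur_eq_det {l : ℕ} (ρ : Fin l → ℤ) : schur ρ = (jtMatrix ρ).det := rfl

/-- The coefficients of `φ(s_ρ)` are the signed maximal minors of the Jacobi–Trudi matrix of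
`(m, ρ)` with its first row deleted. Both sides equal the determinant of that matrix with first
row replaced by `1, u, …, u^l`: the right-hand side by expansion along this row, the left-hand
side after subtracting from each column `u` times the preceding one. -/
lemma shift_schur {l : ℕ} (m : ℤ) (ρ : Fin l → ℤ) :
    shift (schur ρ) = ∑ j : Fin (l + 1), Polynomial.C ((-1) ^ (j : ℕ) *
      ((jtMatrix (Fin.cons m ρ : Fin (l + 1) → ℤ)).submatrix Fin.succ j.succAbove).det) *
        Polynomial.X ^ (j : ℕ) := by
  let A : Matrix (Fin (l + 1)) (Fin (l + 1)) (Polynomial Lam) :=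
    Matrix.of (Fin.cons (fun j => Polynomial.X ^ (j : ℕ)) fun i j =>
      Polynomial.C (jtMatrix (Fin.cons m ρ : Fin (l + 1) → ℤ) i.succ j))
  let B : Matrix (Fin (l + 1)) (Fin (l + 1)) (Polynomial Lam) :=
    Matrix.of fun i => Fin.cons (A i 0) fun j => A i j.succ - Polynomial.X * A i j.castSucc
  have hA0 : ∀ j, A 0 j = Polynomial.X ^ (j : ℕ) := fun j => rfl
  have hAs : ∀ i j, A (Fin.succ i) j =
      Polynomial.C (jtMatrix (Fin.cons m ρ : Fin (l + 1) → ℤ) i.succ j) := fun i j => rfl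
  have hB0 : ∀ i, B i 0 = A i 0 := fun i => rfl
  have hBs : ∀ i j, B i (Fin.succ j) = A i j.succ - Polynomial.X * A i j.castSucc :=
    fun i j => rfl
  have hAB : A.det = B.det :=
    Matrix.det_eq_of_forall_col_eq_smul_add_pred (fun _ => Polynomial.X) (fun i => (hB0 i).symm)
      (fun i j => by rw [hBs]; ring)
  have hB : B.det = shift (schur ρ) := by
    rw [Matrix.det_succ_row_zero, Fin.sum_univ_succ, Finset.sum_eq_zero, schur_eq_det,
      AlgHom.map_det]
    · rw [hB0, hA0]
      simp only [Fin.val_zero, pow_zero, one_mul, add_zero]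
      congr 1
      refine Matrix.ext fun i j => ?_
      rw [Matrix.submatrix_apply, Fin.succAbove_zero, hBs, hAs, hAs]
      simp only [AlgHom.mapMatrix_apply, Matrix.map_apply, jtMatrix, Matrix.of_apply,
        Fin.cons_succ, Fin.val_succ, Fin.val_castSucc]
      have e1 : ρ i - ((i : ℕ) + 1 : ℕ) + ((j : ℕ) + 1 : ℕ) = ρ i - (i : ℕ) + (j : ℕ) := by omega
      have e2 : ρ i - ((i : ℕ) + 1 : ℕ) + (j : ℕ) = ρ i - (i : ℕ) + (j : ℕ) - 1 := by omega
      rw [shift_hZ, e1, e2]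
    · intro j _
      rw [hBs, hA0, hA0, Fin.val_succ, Fin.val_castSucc, pow_succ']
      ring
  rw [← hB, ← hAB, Matrix.det_succ_row_zero]
  refine Finset.sum_congr rfl fun j _ => ?_
  have hsub : A.submatrix Fin.succ j.succAbove = (Polynomial.C : Lam →+* _).mapMatrix
      ((jtMatrix (Fin.cons m ρ : Fin (l + 1) → ℤ)).submatrix Fin.succ j.succAbove) :=
    Matrix.ext fun i k => hAs i _
  rw [hA0, hsub, ← RingHom.map_det]
  simp only [map_mul, map_pow, map_neg, map_one]
  ring

/-- `S_{-m} s_ρ = s_{(m,ρ)}` for arbitrary integers: under `u^j ↦ h_{m+j}` the row `1, u, …, u^l`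
becomes the first row of the Jacobi–Trudi matrix of `(m, ρ)`. -/
lemma Sop_schur {l : ℕ} (m : ℤ) (ρ : Fin l → ℤ) :
    Sop (-m) (schur ρ) = schur (Fin.cons m ρ : Fin (l + 1) → ℤ) := by
  have hc : ∀ j : Fin (l + 1), (shift (schur ρ)).coeff j = (-1) ^ (j : ℕ) *
      ((jtMatrix (Fin.cons m ρ : Fin (l + 1) → ℤ)).submatrix
        Fin.succ j.succAbove).det := by
    intro j
    rw [shift_schur m, Polynomial.finsetSum_coeff]
    simp only [Polynomial.coeff_C_mul, Polynomial.coeff_X_pow, Fin.val_inj]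
    simp
  have hd : (shift (schur ρ)).natDegree < l + 1 := by
    rw [Nat.lt_succ_iff, shift_schur m]
    refine Polynomial.natDegree_sum_le_of_forall_le _ _ fun j _ => ?_
    exact (Polynomial.natDegree_C_mul_X_pow_le _ _).trans (by omega)
  rw [Sop_eq _ _ _ hd, Finset.sum_range, schur_eq_det (Fin.cons m ρ : Fin (l + 1) → ℤ),
    Matrix.det_succ_row_zero]
  refine Finset.sum_congr rfl fun j _ => ?_
  rw [hc]
  have h0 : jtMatrix (Fin.cons m ρ : Fin (l + 1) → ℤ) 0 j = hZ ((j : ℤ) - -m) := by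
    simp [jtMatrix, add_comm]
  rw [h0]
  ring

/-- for every partition `λ = (λ₁ ≥ λ₂ ≥ … ≥ λ_l ≥ 0)`, applying the vertex
operator components to the vacuum vector `1 ∈ Λ` gives the Schur function:
`S_{−λ₁} S_{−λ₂} ⋯ S_{−λ_l} (1) = det (h_{λ_i − i + j})_{1≤i,j≤l} = s_λ`. -/
theorem vertex_operators_vacuum_eq_schur (l : ℕ) (lam : Fin l → ℕ) (hlam : Antitone lam) :
    (List.ofFn fun i => -(lam i : ℤ)).foldr Sop 1 = schur fun i => (lam i : ℤ) := by
  clear hlam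
  induction l with
  | zero => simp [schur]
  | succ l ih =>
    rw [List.ofFn_succ, List.foldr_cons, ih, Sop_schur]
    congr 1
    funext i
    refine Fin.cases ?_ (fun i => ?_) i <;> simp
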